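/- Let T ≥ 2 and α ∈ [0,1]. Suppose the file F and shares M_1,…,M_T satisfy recoverability with threshold τ = T, (α, T−1)-privacy, and leakage symmetry. Then for every t ∈ {1,…,T}, H(M_t) ≥ max(1−α, 1/T)·H(F). -/

import Mathlib

/-!
The argument rests on one estimate: adding a share `M t` to a set `S` of shares raises the
information about `F` by at most `H(M t)` (`mutInf_insert_le`). It follows from subadditivity
`H(M_S, M_t) ≤ H(M_S) + H(M_t)` (`ent_pair_le`) and monotonicity
`H(F, M_S) ≤ H(F, M_S, M_t)` (`ent_mono`).

For the bound `1 - α`, take `S` to be all servers but `t`: the information rises from at most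
`α H(F)` to `H(F)`. For the bound `1 / T`, leakage symmetry allows any set of size `s + 1` to be
replaced by one of the form `insert t S`, so induction on `s` gives
`I(F; M_S) ≤ |S| H(M_t)` for a fixed `t` and every `S`; the full set gives `H(F) ≤ T H(M_t)`.
-/

open scoped BigOperators
open Classical

noncomputable section

/-- Probability of an event `A` under the probability mass function `p` on a finite
sample space `Ω`. -/
def prb {Ω : Type} [Fintype Ω] (p : Ω → ℝ) (A : Set Ω) : ℝ :=
  ∑ ω, if ω ∈ A then p ω else 0

/-- Shannon entropy (in bits, base-2 logarithm) of a random variable `X` defined on a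
finite sample space with probability mass function `p`, with the convention
`0 * log 0 = 0`. -/
def ent {Ω V : Type} [Fintype Ω] [Fintype V] (p : Ω → ℝ) (X : Ω → V) : ℝ :=
  -∑ v, prb p {ω | X ω = v} * Real.logb 2 (prb p {ω | X ω = v})

/-- Conditional Shannon entropy `H(X | Y) = H(X, Y) - H(Y)`. -/
def condEnt {Ω V W : Type} [Fintype Ω] [Fintype V] [Fintype W]
    (p : Ω → ℝ) (X : Ω → V) (Y : Ω → W) : ℝ :=
  ent p (fun ω => (X ω, Y ω)) - ent p Y

/-- Mutual information `I(X ; Y) = H(X) + H(Y) - H(X, Y)`. -/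
def mutInf {Ω V W : Type} [Fintype Ω] [Fintype V] [Fintype W]
    (p : Ω → ℝ) (X : Ω → V) (Y : Ω → W) : ℝ :=
  ent p X + ent p Y - ent p (fun ω => (X ω, Y ω))

/-- The tuple of shares `M_S = (M_t)_{t ∈ S}` viewed as a single random variable. -/
def shares {Ω : Type} {T : ℕ} {χ : Fin T → Type} (M : ∀ t, Ω → χ t)
    (S : Finset (Fin T)) : Ω → (∀ t : S, χ t.1) :=
  fun ω t => M t.1 ω

/-- Summing over the values of `X`, weighted by their probabilities, is taking an expectation. -/
lemma sum_prb_mul {Ω V : Type} [Fintype Ω] [Fintype V] (p : Ω → ℝ) (X : Ω → V) (g : V → ℝ) :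
    ∑ v, prb p {ω | X ω = v} * g v = ∑ ω, p ω * g (X ω) := by
  simp only [prb, Finset.sum_mul, Set.mem_ofPred_eq]
  rw [Finset.sum_comm]
  refine Finset.sum_congr rfl fun ω _ => ?_
  simp [ite_mul]

/-- Entropy as the expectation of the surprisal over the sample space. -/
lemma ent_eq {Ω V : Type} [Fintype Ω] [Fintype V] (p : Ω → ℝ) (X : Ω → V) :
    ent p X = -∑ ω, p ω * Real.logb 2 (prb p {ω' | X ω' = X ω}) := by
  rw [ent, sum_prb_mul p X (fun v => Real.logb 2 (prb p {ω | X ω = v}))]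

lemma prb_nonneg {Ω : Type} [Fintype Ω] {p : Ω → ℝ} (hp0 : ∀ ω, 0 ≤ p ω) (A : Set Ω) :
    0 ≤ prb p A :=
  Finset.sum_nonneg fun ω _ => by split_ifs <;> simp [hp0 ω]

lemma prb_mono {Ω : Type} [Fintype Ω] {p : Ω → ℝ} (hp0 : ∀ ω, 0 ≤ p ω) {A B : Set Ω}
    (h : A ⊆ B) : prb p A ≤ prb p B := by
  refine Finset.sum_le_sum fun ω _ => ?_
  by_cases hA : ω ∈ A
  · simp [hA, h hA]
  · simp only [hA, if_false]
    split_ifs <;> simp [hp0 ω]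

lemma le_prb {Ω : Type} [Fintype Ω] {p : Ω → ℝ} (hp0 : ∀ ω, 0 ≤ p ω) {A : Set Ω} {ω : Ω}
    (h : ω ∈ A) : p ω ≤ prb p A := by
  have := Finset.single_le_sum (f := fun ω => if ω ∈ A then p ω else 0)
    (fun i _ => by split_ifs <;> simp [hp0 i]) (Finset.mem_univ ω)
  simpa [h, prb] using this

lemma sum_prb {Ω V : Type} [Fintype Ω] [Fintype V] {p : Ω → ℝ} (hp1 : ∑ ω, p ω = 1)
    (X : Ω → V) : ∑ v, prb p {ω | X ω = v} = 1 := by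
  simpa [hp1] using sum_prb_mul p X (fun _ => 1)

/-- If `X` determines `Y`, then `H(Y) ≤ H(X)`. -/
lemma ent_mono {Ω V W : Type} [Fintype Ω] [Fintype V] [Fintype W] {p : Ω → ℝ}
    (hp0 : ∀ ω, 0 ≤ p ω) (X : Ω → V) (Y : Ω → W) (h : ∀ ω ω', X ω = X ω' → Y ω = Y ω') :
    ent p Y ≤ ent p X := by
  rw [ent_eq, ent_eq]
  refine neg_le_neg (Finset.sum_le_sum fun ω _ => ?_)
  rcases (hp0 ω).eq_or_lt with h0 | h0
  · simp [← h0]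
  · refine mul_le_mul_of_nonneg_left ?_ h0.le
    exact Real.logb_le_logb_of_le (by norm_num) (h0.trans_le (le_prb hp0 (by simp)))
      (prb_mono hp0 fun ω' h' => h _ _ h')

/-- Subadditivity of entropy, by Gibbs' inequality: `log x ≤ x - 1` is applied to the ratio of
the product of the marginals to the joint probability. -/
lemma ent_pair_le {Ω V W : Type} [Fintype Ω] [Fintype V] [Fintype W] {p : Ω → ℝ}
    (hp0 : ∀ ω, 0 ≤ p ω) (hp1 : ∑ ω, p ω = 1) (X : Ω → V) (Y : Ω → W) :
    ent p (fun ω => (X ω, Y ω)) ≤ ent p X + ent p Y := by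
  have hL : 0 < Real.log 2 := Real.log_pos (by norm_num)
  set a : V → ℝ := fun v => prb p {ω | X ω = v} with ha
  set b : W → ℝ := fun w => prb p {ω | Y ω = w} with hb
  set q : V × W → ℝ := fun z => prb p {ω | (X ω, Y ω) = z} with hq
  have hsum : ∑ ω, p ω * (a (X ω) * b (Y ω) / q (X ω, Y ω)) ≤ 1 := by
    rw [← sum_prb_mul p (fun ω => (X ω, Y ω)) (fun z => a z.1 * b z.2 / q z)]
    calc ∑ z, q z * (a z.1 * b z.2 / q z)
        ≤ ∑ z : V × W, a z.1 * b z.2 := by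
          refine Finset.sum_le_sum fun z _ => ?_
          have hab : 0 ≤ a z.1 * b z.2 := mul_nonneg (prb_nonneg hp0 _) (prb_nonneg hp0 _)
          by_cases hz : q z = 0
          · simpa [hz] using hab
          · exact (mul_div_cancel₀ _ hz).le
      _ = 1 := by
          rw [Fintype.sum_prod_type]
          simp only [← Finset.mul_sum]
          rw [sum_prb hp1 Y]
          simpa using sum_prb hp1 X
  have hpt : ∀ ω, p ω * (Real.logb 2 (a (X ω)) + Real.logb 2 (b (Y ω))
      - Real.logb 2 (q (X ω, Y ω)))
      ≤ (p ω * (a (X ω) * b (Y ω) / q (X ω, Y ω)) - p ω) / Real.log 2 := by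
    intro ω
    rcases (hp0 ω).eq_or_lt with h0 | h0
    · simp [← h0]
    · have h1 : 0 < a (X ω) := h0.trans_le (le_prb hp0 (by simp))
      have h2 : 0 < b (Y ω) := h0.trans_le (le_prb hp0 (by simp))
      have h3 : 0 < q (X ω, Y ω) := h0.trans_le (le_prb hp0 (by simp))
      have h4 := Real.log_le_sub_one_of_pos (div_pos (mul_pos h1 h2) h3)
      rw [Real.log_div (mul_pos h1 h2).ne' h3.ne', Real.log_mul h1.ne' h2.ne'] at h4
      have h5 := mul_le_mul_of_nonneg_left h4 h0.le
      simp only [Real.logb]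
      rw [← add_div, ← sub_div, ← mul_div_assoc]
      exact div_le_div_of_nonneg_right (by linarith) hL.le
  have hall := Finset.sum_le_sum fun ω (_ : ω ∈ Finset.univ) => hpt ω
  rw [← Finset.sum_div, Finset.sum_sub_distrib, hp1] at hall
  have hneg : (∑ ω, p ω * (a (X ω) * b (Y ω) / q (X ω, Y ω)) - 1) / Real.log 2 ≤ 0 :=
    div_nonpos_of_nonpos_of_nonneg (by linarith) hL.le
  simp only [mul_sub, mul_add, Finset.sum_sub_distrib, Finset.sum_add_distrib] at hall
  rw [ent_eq, ent_eq, ent_eq]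
  linarith

/-- One more share `M t` reveals at most `H(M t)` additional bits about `F`. -/
lemma mutInf_insert_le {Ω : Type} [Fintype Ω] {p : Ω → ℝ}
    (hp0 : ∀ ω, 0 ≤ p ω) (hp1 : ∑ ω, p ω = 1) {T : ℕ}
    {𝔽 : Type} [Fintype 𝔽] (F : Ω → 𝔽)
    {χ : Fin T → Type} [∀ t, Fintype (χ t)] (M : ∀ t, Ω → χ t)
    (t : Fin T) (S : Finset (Fin T)) :
    mutInf p F (shares M (insert t S)) ≤ mutInf p F (shares M S) + ent p (M t) := by
  have h1 : ent p (shares M (insert t S)) ≤ ent p (fun ω => (shares M S ω, M t ω)) := by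
    refine ent_mono hp0 _ _ fun ω ω' h => ?_
    rw [Prod.mk.injEq] at h
    funext ⟨u, hu⟩
    rcases Finset.mem_insert.1 hu with rfl | hu'
    · exact h.2
    · exact congrFun h.1 ⟨u, hu'⟩
  have h2 := ent_pair_le hp0 hp1 (shares M S) (M t)
  have h3 : ent p (fun ω => (F ω, shares M S ω)) ≤
      ent p (fun ω => (F ω, shares M (insert t S) ω)) := by
    refine ent_mono hp0 _ _ fun ω ω' h => ?_
    rw [Prod.mk.injEq] at h ⊢
    refine ⟨h.1, ?_⟩
    funext u
    exact congrFun h.2 ⟨u.1, Finset.mem_insert_of_mem u.2⟩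
  simp only [mutInf]
  linarith

/-- The empty tuple of shares is constant, hence reveals nothing. -/
lemma mutInf_empty_le {Ω : Type} [Fintype Ω] {p : Ω → ℝ}
    (hp0 : ∀ ω, 0 ≤ p ω) (hp1 : ∑ ω, p ω = 1) {T : ℕ}
    {𝔽 : Type} [Fintype 𝔽] (F : Ω → 𝔽)
    {χ : Fin T → Type} [∀ t, Fintype (χ t)] (M : ∀ t, Ω → χ t) :
    mutInf p F (shares M ∅) ≤ 0 := by
  have hc : ∀ ω ω', shares M ∅ ω = shares M ∅ ω' := fun ω ω' => by
    funext u
    exact absurd u.2 (Finset.notMem_empty _)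
  have h1 : ent p (shares M ∅) = 0 := by
    rw [ent_eq]
    have h : ∀ ω, prb p {ω' | shares M ∅ ω' = shares M ∅ ω} = 1 := fun ω => by
      rw [prb, ← hp1]
      exact Finset.sum_congr rfl fun ω' _ => if_pos (hc ω' ω)
    simp [h]
  have h2 : ent p F ≤ ent p (fun ω => (F ω, shares M ∅ ω)) :=
    ent_mono hp0 _ _ fun ω ω' h => (Prod.mk.inj h).1
  simp only [mutInf]
  linarith

/-- For reconstruction threshold `τ = T`, privacy threshold `z = T - 1`
with leakage parameter `α`, and leakage symmetry, every individual share satisfies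
`H(M_t) ≥ max(1 - α, 1 / T) · H(F)`. -/
theorem share_lower_bound_full_threshold
    {Ω : Type} [Fintype Ω] (p : Ω → ℝ)
    (hp0 : ∀ ω, 0 ≤ p ω) (hp1 : ∑ ω, p ω = 1)
    {T : ℕ} (hT : 2 ≤ T)
    {α : ℝ} (hα0 : 0 ≤ α) (hα1 : α ≤ 1)
    {𝔽 : Type} [Fintype 𝔽] (F : Ω → 𝔽) (hF : 0 < ent p F)
    {χ : Fin T → Type} [∀ t, Fintype (χ t)] (M : ∀ t, Ω → χ t)
    (hrec : condEnt p F (shares M (Finset.univ : Finset (Fin T))) = 0)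
    (hpriv : ∀ S : Finset (Fin T), S.Nonempty → S.card ≤ T - 1 →
      mutInf p F (shares M S) ≤ α * ent p F)
    (hsym : ∀ t : ℕ, 1 ≤ t → t ≤ T → ∃ C : ℝ, 0 ≤ C ∧
      ∀ S : Finset (Fin T), S.card = t → mutInf p F (shares M S) = C * ent p F) :
    ∀ t : Fin T, ent p (M t) ≥ max (1 - α) (1 / (T : ℝ)) * ent p F := by
  intro t
  have hfull : mutInf p F (shares M Finset.univ) = ent p F := by
    simp only [condEnt] at hrec
    simp only [mutInf]
    linarith
  have hA : (1 - α) * ent p F ≤ ent p (M t) := by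
    have hcard : (Finset.univ.erase t).card = T - 1 := by simp
    have h1 := hpriv (Finset.univ.erase t) (Finset.card_pos.1 (by omega)) hcard.le
    have h2 := mutInf_insert_le hp0 hp1 F M t (Finset.univ.erase t)
    rw [Finset.insert_erase (Finset.mem_univ t), hfull] at h2
    linarith
  have hB : ∀ s : ℕ, ∀ S : Finset (Fin T), S.card = s →
      mutInf p F (shares M S) ≤ s * ent p (M t) := by
    intro s
    induction s with
    | zero =>
      intro S hS
      rw [Finset.card_eq_zero.1 hS]
      simpa using mutInf_empty_le hp0 hp1 F M
    | succ s ih =>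
      intro S hS
      have hsT : s + 1 ≤ T := by simpa [hS] using Finset.card_le_univ S
      obtain ⟨C, -, hC⟩ := hsym (s + 1) (by omega) hsT
      obtain ⟨S', hS', hcard⟩ := Finset.exists_subset_card_eq
        (s := Finset.univ.erase t) (n := s) (by simp; omega)
      have ht : t ∉ S' := fun h => Finset.notMem_erase t _ (hS' h)
      -- By symmetry, `S` leaks as much as the set `insert t S'` of the same size.
      rw [hC S hS, ← hC (insert t S') (by rw [Finset.card_insert_of_notMem ht, hcard])]
      have h1 := mutInf_insert_le hp0 hp1 F M t S'
      have h2 := ih S' hcard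
      push_cast
      linarith
  have hB' := hB T Finset.univ (by simp)
  rw [hfull] at hB'
  have hTpos : (0 : ℝ) < T := by exact_mod_cast (by omega : 0 < T)
  rcases max_cases (1 - α) (1 / (T : ℝ)) with ⟨h, _⟩ | ⟨h, _⟩
  · rw [h]
    exact hA
  · rw [h, ge_iff_le, one_div_mul_eq_div, div_le_iff₀ hTpos]
    linarith

end
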